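/- arXiv:0910.2252 — 2 statements merged into one kernel-verified Lean document; each statement's English description precedes it below -/
import Mathlib

section
/- The closed unit ball C = { f ∈ X : ‖f‖₁ ≤ 1 } of X = ℓ¹([0,1], ℂ) is not compact in the weak topology σ(X, C[0,1]) induced by the pairing with C([0,1], ℂ). -/
/-!
If the unit ball were weakly compact, it would contain a barycentre `f` of the unit point masses
with respect to Lebesgue measure, so that `∑ x, g x * f x = ∫ x, g x` for every continuous `g`:
finitely many `g` map the ball onto a compact convex subset of a finite-dimensional space, which
contains its averages, and compactness of the ball treats all `g` at once. Letting `g` converge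
boundedly to the indicator of a point `x` shows that `f x` is the Lebesgue measure of `{x}`. Hence
`f = 0`, which contradicts the case `g = 1`.
-/

open Filter Topology MeasureTheory
open scoped BoundedContinuousFunction

section Barycenter

variable {𝕜 E F Ω : Type*} [RCLike 𝕜] [AddCommGroup E] [Module 𝕜 E] [Module ℝ E]
  [IsScalarTower ℝ 𝕜 E] [AddCommGroup F] [Module 𝕜 F] {B : E →ₗ[𝕜] F →ₗ[𝕜] 𝕜} {K : Set E}
  [MeasurableSpace Ω] {μ : Measure Ω} [IsProbabilityMeasure μ] {φ : Ω → E}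

lemma exists_mem_forall_finset_apply_eq_integral (hK : IsCompact (X := WeakBilin B) K)
    (hK_convex : Convex ℝ K) (hφK : ∀ᵐ ω ∂μ, φ ω ∈ K)
    (hφ : ∀ g, Integrable (fun ω ↦ B (φ ω) g) μ) (t : Finset F) :
    ∃ f ∈ K, ∀ g ∈ t, B f g = ∫ ω, B (φ ω) g ∂μ := by
  let T : E →ₗ[ℝ] t → 𝕜 := LinearMap.pi fun g ↦ (B.flip g).restrictScalars ℝ
  have hT_cont : Continuous (X := WeakBilin B) T :=
    continuous_pi fun g ↦ WeakBilin.eval_continuous B g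
  have hTφ : ∀ g : t, Integrable (fun ω ↦ T (φ ω) g) μ := fun g ↦ hφ g
  obtain ⟨f, hfK, hf⟩ : ∫ ω, T (φ ω) ∂μ ∈ T '' K :=
    (hK_convex.linear_image T).integral_mem (hK.image hT_cont).isClosed
      (hφK.mono fun _ ↦ Set.mem_image_of_mem T) (Integrable.of_eval hTφ)
  refine ⟨f, hfK, fun g hg ↦ ?_⟩
  calc B f g = (∫ ω, T (φ ω) ∂μ) ⟨g, hg⟩ := congrFun hf ⟨g, hg⟩
    _ = ∫ ω, B (φ ω) g ∂μ := eval_integral hTφ _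

theorem exists_mem_forall_apply_eq_integral (hK : IsCompact (X := WeakBilin B) K)
    (hK_convex : Convex ℝ K) (hφK : ∀ᵐ ω ∂μ, φ ω ∈ K)
    (hφ : ∀ g, Integrable (fun ω ↦ B (φ ω) g) μ) :
    ∃ f ∈ K, ∀ g, B f g = ∫ ω, B (φ ω) g ∂μ := by
  obtain ⟨f, hfK, hf⟩ := hK.inter_iInter_nonempty (fun g ↦ {f | B f g = ∫ ω, B (φ ω) g ∂μ})
    (fun g ↦ isClosed_eq (WeakBilin.eval_continuous B g) continuous_const) fun t ↦ by
      obtain ⟨f, hfK, hf⟩ := exists_mem_forall_finset_apply_eq_integral hK hK_convex hφK hφ t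
      exact ⟨f, hfK, Set.mem_iInter₂.2 hf⟩
  exact ⟨f, hfK, Set.mem_iInter.1 hf⟩

end Barycenter

section AtomicRepresentation

variable {𝕜 X : Type*} [RCLike 𝕜]

variable (𝕜) in
lemma exists_seq_tendsto_indicator_of_isClosed [TopologicalSpace X] [HasOuterApproxClosed X]
    {s : Set X} (hs : IsClosed s) :
    ∃ u : ℕ → X →ᵇ 𝕜, (∀ n x, ‖u n x‖ ≤ 1) ∧
      ∀ x, Tendsto (fun n ↦ u n x) atTop (𝓝 (s.indicator 1 x)) := by
  have h_cont : Continuous fun r : NNReal ↦ ((r : ℝ) : 𝕜) := by fun_prop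
  have h_norm (n : ℕ) (x : X) : ‖((hs.apprSeq n x : ℝ) : 𝕜)‖ ≤ 1 := by
    simpa using HasOuterApproxClosed.apprSeq_apply_le_one hs n x
  refine ⟨fun n ↦ .ofNormedAddCommGroup (fun x ↦ ((hs.apprSeq n x : ℝ) : 𝕜))
    (h_cont.comp (hs.apprSeq n).continuous) 1 (h_norm n), h_norm, fun x ↦ ?_⟩
  have h_lim := (h_cont.tendsto _).comp
    (tendsto_pi_nhds.1 (HasOuterApproxClosed.tendsto_apprSeq hs) x)
  by_cases hx : x ∈ s <;> simpa [Function.comp_def, hx] using h_lim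

lemma tendsto_tsum_mul_of_tendsto_indicator {f : X → 𝕜} (hf : Summable fun x ↦ ‖f x‖)
    {s : Set X} {u : ℕ → X → 𝕜} (hu : ∀ n x, ‖u n x‖ ≤ 1)
    (hu_lim : ∀ x, Tendsto (fun n ↦ u n x) atTop (𝓝 (s.indicator 1 x))) :
    Tendsto (fun n ↦ ∑' x, u n x * f x) atTop (𝓝 (∑' x, s.indicator f x)) := by
  have h_indicator (x : X) : s.indicator f x = s.indicator 1 x * f x := by
    by_cases hx : x ∈ s <;> simp [hx]
  rw [tsum_congr h_indicator]
  refine tendsto_tsum_of_dominated_convergence hf (fun x ↦ (hu_lim x).mul_const _)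
    (.of_forall fun n x ↦ ?_)
  rw [norm_mul]
  exact mul_le_of_le_one_left (norm_nonneg _) (hu n x)

variable [MeasurableSpace X] {μ : Measure X} [IsFiniteMeasure μ]

lemma tendsto_integral_of_tendsto_indicator {s : Set X} (hs : MeasurableSet s) {u : ℕ → X → 𝕜}
    (hu_meas : ∀ n, AEStronglyMeasurable (u n) μ) (hu : ∀ n x, ‖u n x‖ ≤ 1)
    (hu_lim : ∀ x, Tendsto (fun n ↦ u n x) atTop (𝓝 (s.indicator 1 x))) :
    Tendsto (fun n ↦ ∫ x, u n x ∂μ) atTop (𝓝 (μ.real s : 𝕜)) := by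
  have h_integral : ∫ x, s.indicator (1 : X → 𝕜) x ∂μ = μ.real s := by
    simp [integral_indicator hs, RCLike.real_smul_eq_coe_mul]
  rw [← h_integral]
  exact tendsto_integral_of_dominated_convergence (fun _ ↦ 1) hu_meas (integrable_const 1)
    (fun n ↦ .of_forall (hu n)) (.of_forall hu_lim)

variable [TopologicalSpace X] [HasOuterApproxClosed X] [OpensMeasurableSpace X]

theorem tsum_indicator_eq_measureReal_of_forall_tsum_mul_eq_integral {f : X → 𝕜}
    (hf : Summable fun x ↦ ‖f x‖) (hfμ : ∀ g : X →ᵇ 𝕜, ∑' x, g x * f x = ∫ x, g x ∂μ)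
    {s : Set X} (hs : IsClosed s) : ∑' x, s.indicator f x = μ.real s := by
  obtain ⟨u, hu, hu_lim⟩ := exists_seq_tendsto_indicator_of_isClosed 𝕜 hs
  have h_integral : Tendsto (fun n ↦ ∫ x, u n x ∂μ) atTop (𝓝 (μ.real s : 𝕜)) :=
    tendsto_integral_of_tendsto_indicator hs.measurableSet
      (fun n ↦ (u n).continuous.aestronglyMeasurable) hu hu_lim
  refine tendsto_nhds_unique (tendsto_tsum_mul_of_tendsto_indicator hf hu hu_lim) ?_
  simpa only [hfμ] using h_integral

lemma eq_measureReal_singleton_of_forall_tsum_mul_eq_integral [T1Space X] {f : X → 𝕜}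
    (hf : Summable fun x ↦ ‖f x‖) (hfμ : ∀ g : X →ᵇ 𝕜, ∑' x, g x * f x = ∫ x, g x ∂μ) (x : X) :
    f x = μ.real {x} := by
  rw [← tsum_indicator_eq_measureReal_of_forall_tsum_mul_eq_integral hf hfμ isClosed_singleton,
    tsum_eq_single x fun y hy ↦ Set.indicator_of_notMem (s := {x}) hy f,
    Set.indicator_of_mem (Set.mem_singleton x)]

end AtomicRepresentation

section UnitBall

variable {𝕜 X : Type*} [RCLike 𝕜]

lemma tsum_mul_lp_single [DecidableEq X] (g : X → 𝕜) (x : X) :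
    ∑' y, g y * (lp.single 1 x 1 : lp (fun _ : X ↦ 𝕜) 1) y = g x := by
  rw [tsum_eq_single x fun y hy ↦ by rw [lp.single_apply_ne _ _ _ hy, mul_zero],
    lp.single_apply_self, mul_one]

variable [TopologicalSpace X] [CompactSpace X]

lemma exists_forall_tsum_mul_eq_integral_of_isCompact_unitBall
    [MeasurableSpace X] [OpensMeasurableSpace X] (μ : Measure X) [IsProbabilityMeasure μ]
    {B : lp (fun _ : X ↦ 𝕜) 1 →ₗ[𝕜] C(X, 𝕜) →ₗ[𝕜] 𝕜}
    (hB : ∀ (f : lp (fun _ : X ↦ 𝕜) 1) (g : C(X, 𝕜)), B f g = ∑' x, g x * f x)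
    (h_compact : IsCompact (X := WeakBilin B) {f : lp (fun _ : X ↦ 𝕜) 1 | ‖f‖ ≤ 1}) :
    ∃ f : lp (fun _ : X ↦ 𝕜) 1, ∀ g : C(X, 𝕜), ∑' x, g x * f x = ∫ x, g x ∂μ := by
  classical
  let δ (x : X) : lp (fun _ : X ↦ 𝕜) 1 := lp.single 1 x 1
  have hδ (x : X) (g : C(X, 𝕜)) : B (δ x) g = g x := (hB _ g).trans (tsum_mul_lp_single g x)
  have hδ_norm (x : X) : ‖δ x‖ ≤ 1 := by simp [δ, lp.norm_single]
  have h_convex : Convex ℝ {f : lp (fun _ : X ↦ 𝕜) 1 | ‖f‖ ≤ 1} := by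
    simpa using convexOn_univ_norm.convex_le 1
  have h_integrable (g : C(X, 𝕜)) : Integrable (fun x ↦ B (δ x) g) μ := by
    simp only [hδ]
    exact (BoundedContinuousFunction.mkOfCompact g).integrable μ
  obtain ⟨f, -, hf⟩ := exists_mem_forall_apply_eq_integral (B := B) h_compact h_convex
    (.of_forall hδ_norm) h_integrable
  exact ⟨f, fun g ↦ by simpa only [hδ, hB] using hf g⟩

theorem unit_ball_not_weakly_compact_l1_pairing_continuous_general
    [T1Space X] [HasOuterApproxClosed X] [MeasurableSpace X] [OpensMeasurableSpace X]
    (μ : Measure X) [IsProbabilityMeasure μ] [NullSingletonClass μ]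
    (B : lp (fun _ : X ↦ 𝕜) 1 →ₗ[𝕜] C(X, 𝕜) →ₗ[𝕜] 𝕜)
    (hB : ∀ (f : lp (fun _ : X ↦ 𝕜) 1) (g : C(X, 𝕜)), B f g = ∑' x, g x * f x) :
    ¬ IsCompact (X := WeakBilin B) {f : lp (fun _ : X ↦ 𝕜) 1 | ‖f‖ ≤ 1} := by
  intro h_compact
  obtain ⟨f, hf⟩ := exists_forall_tsum_mul_eq_integral_of_isCompact_unitBall μ hB h_compact
  have hf_summable : Summable fun x ↦ ‖f x‖ := by simpa using (lp.memℓp f).summable (by simp)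
  have hf_zero (x : X) : f x = 0 := by
    have h_atom := eq_measureReal_singleton_of_forall_tsum_mul_eq_integral hf_summable
      (fun g ↦ hf g.toContinuousMap) x
    simpa [measureReal_def] using h_atom
  have h_one : (0 : 𝕜) = 1 := by simpa [hf_zero] using hf 1
  exact zero_ne_one h_one

end UnitBall

/-- The closed unit ball of `X = ℓ¹([0,1], ℂ)` is not compact in the weak topology
`σ(X, C[0,1])` induced by the pairing `B(f)(g) = ∑_x g(x) f(x)` with `C([0,1], ℂ)`. -/
theorem unit_ball_not_weakly_compact_l1_pairing_continuous
    (B : lp (fun _ : unitInterval => ℂ) 1 →ₗ[ℂ] C(unitInterval, ℂ) →ₗ[ℂ] ℂ)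
    (hB : ∀ (f : lp (fun _ : unitInterval => ℂ) 1) (g : C(unitInterval, ℂ)),
      B f g = ∑' x : unitInterval, g x * f x) :
    ¬ IsCompact (show Set (WeakBilin B) from
      { f : lp (fun _ : unitInterval => ℂ) 1 | ‖f‖ ≤ 1 }) :=
  unit_ball_not_weakly_compact_l1_pairing_continuous_general volume B hB
end

section
/- Let C = { f ∈ X : ‖f‖₁ ≤ 1 } be the closed unit ball of X = ℓ¹([0,1], ℂ). Then: (i) C is convex, circled, and closed in the weak topology σ(X, C[0,1]); (ii) for every g ∈ C([0,1], ℂ) there exists f₀ ∈ C with |∑_{x ∈ [0,1]} f₀(x) g(x)| = sup_{f ∈ C} |∑_{x ∈ [0,1]} f(x) g(x)|; and yet (iii) C is not compact in σ(X, C[0,1]). -/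
/-!
The norm of `ℓ¹(K)` is the supremum of the pairings with the unit ball of `C(K)`, hence lower
semicontinuous for the weak topology, and a pairing with `g` is maximised over the unit ball by the
point mass at a maximum of `|g|`.

A compact convex set containing all the point masses must contain a barycenter of every probability
measure `μ` on `K`, that is, some `f` with `∑ f(x) g(x) = ∫ g dμ` for all `g ∈ C(K)`. Testing this
identity on bump functions concentrated at `x` gives `f(x) = 0` as soon as `μ {x} = 0`. If `μ` has
no atoms then `f = 0`, contradicting the identity for `g = 1`.
-/

open Filter MeasureTheory Metric Set Topology
open scoped lp

universe u v

theorem eq_biSup_of_isMaxOn {α : Type*} {φ : α → ℝ} {s : Set α} {a : α} (ha : a ∈ s)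
    (h_nonneg : 0 ≤ φ a) (h_max : IsMaxOn φ s a) : φ a = ⨆ x ∈ s, φ x := by
  -- The real supremum over an empty index type is `0`, so nonnegativity covers the `x ∉ s`.
  have h_le : ∀ x, ⨆ _ : x ∈ s, φ x ≤ φ a := fun x => Real.iSup_le (fun hx => h_max hx) h_nonneg
  refine le_antisymm ?_ (Real.iSup_le h_le h_nonneg)
  exact le_ciSup_of_le ⟨φ a, forall_mem_range.2 h_le⟩ a
    (ciSup_pos (f := fun _ : a ∈ s => φ a) ha).ge

theorem convex_setOf_norm_le {E : Type*} [SeminormedAddCommGroup E] [NormedSpace ℝ E] (c : ℝ) :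
    Convex ℝ {x : E | ‖x‖ ≤ c} := by
  simpa using (convexOn_univ_norm (E := E)).convex_le c

theorem exists_mem_forall_eq_integral_of_isCompact_convex {ι Ω E F : Type*} [AddCommGroup E]
    [Module ℝ E] [TopologicalSpace E] [NormedAddCommGroup F] [NormedSpace ℝ F] [CompleteSpace F]
    [MeasurableSpace Ω] {μ : Measure Ω} [IsProbabilityMeasure μ] {s : Set E} (hs : IsCompact s)
    (hs_convex : Convex ℝ s) (ℓ : ι → E →L[ℝ] F) {δ : Ω → E} (hδ : ∀ ω, δ ω ∈ s)
    (h_int : ∀ i, Integrable (fun ω => ℓ i (δ ω)) μ) :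
    ∃ e ∈ s, ∀ i, ℓ i e = ∫ ω, ℓ i (δ ω) ∂μ := by
  suffices (s ∩ ⋂ i, {e | ℓ i e = ∫ ω, ℓ i (δ ω) ∂μ}).Nonempty by
    simpa only [Set.Nonempty, mem_inter_iff, mem_iInter, mem_ofPred_eq] using this
  -- By compactness finitely many functionals suffice, and those map `s` into a Banach space.
  refine hs.inter_iInter_nonempty _
    (fun i => isClosed_eq (ℓ i).continuous continuous_const) fun u => ?_
  let L : E →L[ℝ] (u → F) := .pi fun i => ℓ i
  have hL_int : ∀ i : u, Integrable (fun ω => L (δ ω) i) μ := fun i => h_int i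
  obtain ⟨e, he, hLe⟩ : ∫ ω, L (δ ω) ∂μ ∈ L '' s :=
    (hs_convex.linear_image L.toLinearMap).integral_mem (hs.image L.continuous).isClosed
      (.of_forall fun ω => mem_image_of_mem L (hδ ω)) (.of_eval hL_int)
  refine ⟨e, he, mem_iInter₂.2 fun i hi => ?_⟩
  exact (congrFun hLe ⟨i, hi⟩).trans (eval_integral hL_int ⟨i, hi⟩)

theorem exists_continuousMap_forall_mem_eqOn_of_finite {X : Type u} {Y : Type v}
    [TopologicalSpace X] [T4Space X] [TopologicalSpace Y] {t : Set Y} [TietzeExtension.{u} t]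
    {s : Set X} (hs : s.Finite) {h : X → Y} (hh : ∀ x, h x ∈ t) :
    ∃ g : C(X, Y), (∀ x, g x ∈ t) ∧ EqOn g h s := by
  have : DiscreteTopology s := hs.instDiscreteTopology
  obtain ⟨g, hgt, hg⟩ := ContinuousMap.exists_forall_mem_restrict_eq hs.isClosed
    (⟨fun x => h x, continuous_of_discreteTopology⟩ : C(s, Y)) (fun x => hh x)
  exact ⟨g, hgt, fun x hx => DFunLike.congr_fun hg ⟨x, hx⟩⟩

theorem exists_continuousMap_eqOn_single_norm_integral_le (𝕜 : Type*) {X : Type*} [RCLike 𝕜]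
    [TopologicalSpace X] [T4Space X] [DecidableEq X] [MeasurableSpace X] {μ : Measure X}
    [μ.OuterRegular] {x : X} (hx : μ {x} = 0) {s : Set X} (hs : s.Finite) {ε : ℝ} (hε : 0 < ε) :
    ∃ g : C(X, 𝕜), (∀ y, ‖g y‖ ≤ 1) ∧ EqOn g (Pi.single x 1) s ∧ ‖∫ y, g y ∂μ‖ ≤ ε := by
  obtain ⟨U, hxU, hU, hμU⟩ : ∃ U ⊇ {x}, IsOpen U ∧ μ U < .ofReal ε :=
    Set.exists_isOpen_lt_of_lt {x} _ (by simpa [hx])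
  obtain ⟨φ, hφ_zero, hφ_one, hφ⟩ := exists_continuous_zero_one_of_isClosed
    (hU.isClosed_compl.union (hs.sdiff (t := {x})).isClosed) (isClosed_singleton (x := x))
    (disjoint_singleton_right.2 (by simpa using hxU))
  have hφ_norm (y : X) : ‖(φ y : 𝕜)‖ ≤ 1 := by
    rw [RCLike.norm_ofReal, abs_of_nonneg (hφ y).1]
    exact (hφ y).2
  refine ⟨⟨fun y => (φ y : 𝕜), by fun_prop⟩, hφ_norm, fun y hy => ?_, ?_⟩
  · rcases eq_or_ne y x with rfl | hyx
    · simp [hφ_one rfl]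
    · simp [hyx, hφ_zero (.inr ⟨hy, hyx⟩)]
  · calc ‖∫ y, (φ y : 𝕜) ∂μ‖ = ‖∫ y in U, (φ y : 𝕜) ∂μ‖ := by
          rw [setIntegral_eq_integral_of_forall_compl_eq_zero fun y hy => by
            simp [hφ_zero (.inl hy)]]
      _ ≤ 1 * μ.real U :=
          norm_setIntegral_le_of_norm_le_const (hμU.trans ENNReal.ofReal_lt_top)
            fun y _ => hφ_norm y
      _ ≤ ε := by
          rw [one_mul]
          exact ENNReal.toReal_le_of_le_ofReal hε.le hμU.le

namespace LpOne

section Series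

variable {ι R : Type*} [NormedRing R]

theorem hasSum_norm {E : ι → Type*} [∀ i, NormedAddCommGroup (E i)] (f : lp E 1) :
    HasSum (fun i => ‖f i‖) ‖f‖ := by
  simpa using lp.hasSum_norm (by simp) f

theorem norm_tsum_mul_le (f : ℓ^1(ι, R)) {g : ι → R} {c : ℝ} (hg : ∀ i, ‖g i‖ ≤ c) :
    ‖∑' i, f i * g i‖ ≤ ‖f‖ * c :=
  tsum_of_norm_bounded ((hasSum_norm f).mul_right c) fun i => norm_mul_le_of_le le_rfl (hg i)

theorem tsum_single_mul [DecidableEq ι] (i : ι) (a : R) (g : ι → R) :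
    ∑' j, (lp.single 1 i a : ℓ^1(ι, R)) j * g j = a * g i := by
  rw [tsum_eq_single i fun j hj => by simp [hj], lp.single_apply_self]

theorem tendsto_tsum_mul_of_eqOn_finset [CompleteSpace R] (f : ℓ^1(ι, R)) {g : Finset ι → ι → R}
    {h : ι → R} {c : ℝ} (hg : ∀ s i, ‖g s i‖ ≤ c) (hgh : ∀ s, EqOn (g s) h s) :
    Tendsto (fun s => ∑' i, f i * g s i) atTop (𝓝 (∑' i, f i * h i)) := by
  refine tendsto_tsum_of_dominated_convergence ((hasSum_norm f).summable.mul_right c) (fun i => ?_)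
    (.of_forall fun s i => norm_mul_le_of_le le_rfl (hg s i))
  refine tendsto_const_nhds.congr' ?_
  filter_upwards [eventually_ge_atTop {i}] with s hs
  rw [hgh s (Finset.singleton_subset_iff.1 hs)]

end Series

section ContinuousPairing

variable {K 𝕜 : Type*} [TopologicalSpace K] [RCLike 𝕜]

theorem norm_le_of_forall_norm_tsum_mul_le [T4Space K] (f : ℓ^1(K, 𝕜)) {c : ℝ}
    (h : ∀ g : C(K, 𝕜), (∀ x, ‖g x‖ ≤ 1) → ‖∑' x, f x * g x‖ ≤ c) : ‖f‖ ≤ c := by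
  choose phase h_norm h_phase using fun x => RCLike.exists_norm_eq_mul_self (f x)
  choose g hg hg_eq using fun s : Finset K =>
    exists_continuousMap_forall_mem_eqOn_of_finite (t := closedBall (0 : 𝕜) 1) s.finite_toSet
      (h := phase) fun x => by simp [h_norm]
  simp only [mem_closedBall_zero_iff] at hg
  have h_sum : ∑' x, f x * phase x = (‖f‖ : 𝕜) := by
    simp_rw [mul_comm (f _), ← h_phase, ← RCLike.ofReal_tsum, (hasSum_norm f).tsum_eq]
  have h_lim : Tendsto (fun s => ∑' x, f x * g s x) atTop (𝓝 (‖f‖ : 𝕜)) :=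
    h_sum ▸ tendsto_tsum_mul_of_eqOn_finset f hg hg_eq
  simpa using le_of_tendsto h_lim.norm (.of_forall fun s => h (g s) (hg s))

theorem apply_eq_zero_of_forall_tsum_mul_eq_integral [T4Space K] [MeasurableSpace K]
    {μ : Measure K} [μ.OuterRegular] {f : ℓ^1(K, 𝕜)}
    (hf : ∀ g : C(K, 𝕜), ∑' y, f y * g y = ∫ y, g y ∂μ) {x : K} (hx : μ {x} = 0) : f x = 0 := by
  classical
  suffices ∀ ε > 0, ‖f x‖ ≤ ε from norm_le_zero_iff.1 (le_of_forall_gt_imp_ge_of_dense this)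
  intro ε hε
  choose g hg hg_eq hg_int using fun s : Finset K =>
    exists_continuousMap_eqOn_single_norm_integral_le 𝕜 hx s.finite_toSet hε
  have h_sum : ∑' y, f y * (Pi.single x 1 : K → 𝕜) y = f x := by
    rw [tsum_eq_single x fun y hy => by simp [hy], Pi.single_eq_same, mul_one]
  have h_lim : Tendsto (fun s => ∑' y, f y * g s y) atTop (𝓝 (f x)) :=
    h_sum ▸ tendsto_tsum_mul_of_eqOn_finset f hg hg_eq
  exact le_of_tendsto h_lim.norm (.of_forall fun s => (hf (g s)).symm ▸ hg_int s)

variable [CompactSpace K]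

theorem exists_isMaxOn_norm_tsum_mul [Nonempty K] (g : C(K, 𝕜)) :
    ∃ f₀ ∈ {f : ℓ^1(K, 𝕜) | ‖f‖ ≤ 1},
      IsMaxOn (fun f : ℓ^1(K, 𝕜) => ‖∑' x, f x * g x‖) {f | ‖f‖ ≤ 1} f₀ := by
  classical
  obtain ⟨x, -, hx⟩ := isCompact_univ.exists_isMaxOn univ_nonempty g.continuous.norm.continuousOn
  have h_le (f : ℓ^1(K, 𝕜)) (hf : ‖f‖ ≤ 1) : ‖∑' y, f y * g y‖ ≤ ‖g x‖ :=
    (norm_tsum_mul_le f fun y => hx (mem_univ y)).trans (mul_le_of_le_one_left (norm_nonneg _) hf)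
  refine ⟨lp.single 1 x 1, by simp [lp.norm_single], fun f hf => ?_⟩
  simpa only [mem_ofPred_eq, tsum_single_mul, one_mul] using h_le f hf

variable {B : ℓ^1(K, 𝕜) →ₗ[𝕜] C(K, 𝕜) →ₗ[𝕜] 𝕜} (hB : ∀ f g, B f g = ∑' x, f x * g x)

include hB

theorem isClosed_weakBilin_setOf_norm_le [T2Space K] (c : ℝ) :
    IsClosed (X := WeakBilin B) {f : ℓ^1(K, 𝕜) | ‖f‖ ≤ c} := by
  have h_eq : {f : ℓ^1(K, 𝕜) | ‖f‖ ≤ c} =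
      ⋂ (g : C(K, 𝕜)) (_ : ∀ x, ‖g x‖ ≤ 1), {f | ‖B f g‖ ≤ c} := by
    ext f
    simp only [mem_ofPred_eq, mem_iInter, hB]
    exact ⟨fun hf g hg => ((norm_tsum_mul_le f hg).trans_eq (mul_one _)).trans hf,
      norm_le_of_forall_norm_tsum_mul_le f⟩
  exact h_eq ▸ isClosed_biInter fun g _ =>
    isClosed_le (WeakBilin.eval_continuous B g).norm continuous_const

theorem not_isCompact_weakBilin_setOf_norm_le_one [T2Space K] [MeasurableSpace K]
    [OpensMeasurableSpace K] (μ : Measure K) [IsProbabilityMeasure μ] [NullSingletonClass μ]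
    [μ.OuterRegular] : ¬ IsCompact (X := WeakBilin B) {f : ℓ^1(K, 𝕜) | ‖f‖ ≤ 1} := by
  classical
  intro h_compact
  let pointMass (x : K) : ℓ^1(K, 𝕜) := lp.single 1 x 1
  have h_mem (x : K) : ‖pointMass x‖ ≤ 1 := by simp [pointMass, lp.norm_single]
  have h_pair (x : K) (g : C(K, 𝕜)) : B (pointMass x) g = g x := by
    rw [hB, tsum_single_mul, one_mul]
  have h_int (g : C(K, 𝕜)) : Integrable (fun x => B (pointMass x) g) μ := by
    simpa only [h_pair] using
      g.continuous.integrable_of_hasCompactSupport (.of_compactSpace g)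
  obtain ⟨f, -, hf⟩ : ∃ f ∈ {f : ℓ^1(K, 𝕜) | ‖f‖ ≤ 1}, ∀ g, B f g = ∫ x, B (pointMass x) g ∂μ :=
    exists_mem_forall_eq_integral_of_isCompact_convex h_compact
      (convex_setOf_norm_le (E := ℓ^1(K, 𝕜)) 1)
      (fun g => (WeakBilin.eval B g).restrictScalars ℝ) h_mem h_int
  simp only [h_pair, hB] at hf
  have hf_zero (x : K) : f x = 0 :=
    apply_eq_zero_of_forall_tsum_mul_eq_integral hf (measure_singleton x)
  simpa [hf_zero] using hf 1

end ContinuousPairing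

end LpOne

theorem counterexample_sup_theorem_locally_convex_general {K 𝕜 : Type*} [RCLike 𝕜]
    [TopologicalSpace K] [CompactSpace K] [T2Space K] [MeasurableSpace K] [OpensMeasurableSpace K]
    (μ : Measure K) [IsProbabilityMeasure μ] [NullSingletonClass μ] [μ.OuterRegular]
    (B : ℓ^1(K, 𝕜) →ₗ[𝕜] C(K, 𝕜) →ₗ[𝕜] 𝕜) (hB : ∀ f g, B f g = ∑' x, g x * f x) :
    Convex ℝ {f : ℓ^1(K, 𝕜) | ‖f‖ ≤ 1} ∧
    (∀ f ∈ {f : ℓ^1(K, 𝕜) | ‖f‖ ≤ 1}, ∀ α : 𝕜, ‖α‖ ≤ 1 → α • f ∈ {f : ℓ^1(K, 𝕜) | ‖f‖ ≤ 1}) ∧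
    IsClosed (X := WeakBilin B) {f : ℓ^1(K, 𝕜) | ‖f‖ ≤ 1} ∧
    (∀ g : C(K, 𝕜), ∃ f₀ ∈ {f : ℓ^1(K, 𝕜) | ‖f‖ ≤ 1},
      ‖∑' x, f₀ x * g x‖ = ⨆ f ∈ {f : ℓ^1(K, 𝕜) | ‖f‖ ≤ 1}, ‖∑' x, f x * g x‖) ∧
    ¬ IsCompact (X := WeakBilin B) {f : ℓ^1(K, 𝕜) | ‖f‖ ≤ 1} := by
  have : Nonempty K := nonempty_of_isProbabilityMeasure μ
  have hB' (f : ℓ^1(K, 𝕜)) (g : C(K, 𝕜)) : B f g = ∑' x, f x * g x := by simp only [hB, mul_comm]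
  refine ⟨convex_setOf_norm_le 1, fun f hf α hα => ?_,
    LpOne.isClosed_weakBilin_setOf_norm_le hB' 1, fun g => ?_,
    LpOne.not_isCompact_weakBilin_setOf_norm_le_one hB' μ⟩
  · exact (norm_smul_le α f).trans (mul_le_one₀ hα (norm_nonneg f) hf)
  · obtain ⟨f₀, hf₀, h_max⟩ := LpOne.exists_isMaxOn_norm_tsum_mul g
    exact ⟨f₀, hf₀, eq_biSup_of_isMaxOn (φ := fun f : ℓ^1(K, 𝕜) => ‖∑' x, f x * g x‖) hf₀
      (norm_nonneg _) h_max⟩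

/-- The paper's counterexample, combined: the closed unit ball `C` of
`X = ℓ¹([0,1], ℂ)` is (i) convex, circled and closed in the weak topology
`σ(X, C[0,1])` of the pairing `B(f)(g) = ∑_x g(x) f(x)` with `C([0,1], ℂ)`;
(ii) every such pairing functional attains (in modulus) its supremum on `C`;
and yet (iii) `C` is not compact in `σ(X, C[0,1])`. -/
theorem counterexample_sup_theorem_locally_convex
    (B : lp (fun _ : unitInterval => ℂ) 1 →ₗ[ℂ] C(unitInterval, ℂ) →ₗ[ℂ] ℂ)
    (hB : ∀ (f : lp (fun _ : unitInterval => ℂ) 1) (g : C(unitInterval, ℂ)),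
      B f g = ∑' x : unitInterval, g x * f x) :
    Convex ℝ { f : lp (fun _ : unitInterval => ℂ) 1 | ‖f‖ ≤ 1 } ∧
    (∀ f ∈ { f : lp (fun _ : unitInterval => ℂ) 1 | ‖f‖ ≤ 1 },
      ∀ α : ℂ, ‖α‖ ≤ 1 →
        α • f ∈ { f : lp (fun _ : unitInterval => ℂ) 1 | ‖f‖ ≤ 1 }) ∧
    IsClosed (show Set (WeakBilin B) from
      { f : lp (fun _ : unitInterval => ℂ) 1 | ‖f‖ ≤ 1 }) ∧
    (∀ g : C(unitInterval, ℂ),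
      ∃ f₀ ∈ { f : lp (fun _ : unitInterval => ℂ) 1 | ‖f‖ ≤ 1 },
        ‖∑' x : unitInterval, f₀ x * g x‖ =
          ⨆ f ∈ { f : lp (fun _ : unitInterval => ℂ) 1 | ‖f‖ ≤ 1 },
            ‖∑' x : unitInterval, f x * g x‖) ∧
    ¬ IsCompact (show Set (WeakBilin B) from
      { f : lp (fun _ : unitInterval => ℂ) 1 | ‖f‖ ≤ 1 }) :=
  counterexample_sup_theorem_locally_convex_general volume B hB
end
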